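/- arXiv:1705.10189 — 6 statements merged into one kernel-verified Lean document; each statement's English description precedes it below -/
import Mathlib

section
/- Let 𝒦 be a category and let P be a class of morphisms of 𝒦 (a morphism property). The following are equivalent: (a) there exists a norm μ on 𝒦 whose kernel {f : μ(f) = 0} equals P; (b) there exists a norm μ on 𝒦 taking only the values 0 and ∞ whose kernel equals P; (c) P contains all identity morphisms, is closed under composition, and satisfies (K2): whenever f ∈ P and f ∘ g ∈ P (for a composable pair f, g), then g ∈ P. -/
open CategoryTheory

/-! The kernel of any norm inherits the three closure conditions, since the norm inequalities
bound a value by a sum of zeros. Conversely, the closure conditions say exactly that the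
function equal to `0` on `P` and `∞` elsewhere is a norm: its inequalities can only fail when
both right-hand terms vanish. A discrete norm is in particular a norm, which closes the cycle. -/

/-- For a class of morphisms `P` of a category, the following are
equivalent: (a) `P` is the kernel of some norm; (b) `P` is the kernel of some
discrete (`{0, ∞}`-valued) norm; (c) `P` contains identities, is closed under
composition, and satisfies (K2). -/
theorem stmt_1 {C : Type*} [Category C] (P : MorphismProperty C) :
    ((∃ μ : ∀ ⦃x y : C⦄, (x ⟶ y) → ENNReal,
        (∀ x : C, μ (𝟙 x) = 0) ∧
        (∀ ⦃x y z : C⦄ (g : x ⟶ y) (f : y ⟶ z), μ (g ≫ f) ≤ μ f + μ g) ∧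
        (∀ ⦃x y z : C⦄ (g : x ⟶ y) (f : y ⟶ z), μ g ≤ μ (g ≫ f) + μ f) ∧
        (∀ ⦃x y : C⦄ (f : x ⟶ y), μ f = 0 ↔ P f)) ↔
      (∃ μ : ∀ ⦃x y : C⦄, (x ⟶ y) → ENNReal,
        (∀ x : C, μ (𝟙 x) = 0) ∧
        (∀ ⦃x y z : C⦄ (g : x ⟶ y) (f : y ⟶ z), μ (g ≫ f) ≤ μ f + μ g) ∧
        (∀ ⦃x y z : C⦄ (g : x ⟶ y) (f : y ⟶ z), μ g ≤ μ (g ≫ f) + μ f) ∧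
        (∀ ⦃x y : C⦄ (f : x ⟶ y), μ f = 0 ∨ μ f = ⊤) ∧
        (∀ ⦃x y : C⦄ (f : x ⟶ y), μ f = 0 ↔ P f))) ∧
    ((∃ μ : ∀ ⦃x y : C⦄, (x ⟶ y) → ENNReal,
        (∀ x : C, μ (𝟙 x) = 0) ∧
        (∀ ⦃x y z : C⦄ (g : x ⟶ y) (f : y ⟶ z), μ (g ≫ f) ≤ μ f + μ g) ∧
        (∀ ⦃x y z : C⦄ (g : x ⟶ y) (f : y ⟶ z), μ g ≤ μ (g ≫ f) + μ f) ∧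
        (∀ ⦃x y : C⦄ (f : x ⟶ y), μ f = 0 ↔ P f)) ↔
      ((∀ x : C, P (𝟙 x)) ∧
        (∀ ⦃x y z : C⦄ (g : x ⟶ y) (f : y ⟶ z), P g → P f → P (g ≫ f)) ∧
        (∀ ⦃x y z : C⦄ (g : x ⟶ y) (f : y ⟶ z), P f → P (g ≫ f) → P g))) := by
  classical
  have hac : (∃ μ : ∀ ⦃x y : C⦄, (x ⟶ y) → ENNReal,
        (∀ x : C, μ (𝟙 x) = 0) ∧
        (∀ ⦃x y z : C⦄ (g : x ⟶ y) (f : y ⟶ z), μ (g ≫ f) ≤ μ f + μ g) ∧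
        (∀ ⦃x y z : C⦄ (g : x ⟶ y) (f : y ⟶ z), μ g ≤ μ (g ≫ f) + μ f) ∧
        (∀ ⦃x y : C⦄ (f : x ⟶ y), μ f = 0 ↔ P f)) →
      ((∀ x : C, P (𝟙 x)) ∧
        (∀ ⦃x y z : C⦄ (g : x ⟶ y) (f : y ⟶ z), P g → P f → P (g ≫ f)) ∧
        (∀ ⦃x y z : C⦄ (g : x ⟶ y) (f : y ⟶ z), P f → P (g ≫ f) → P g)) := by
    rintro ⟨μ, h1, h2, h3, hP⟩
    refine ⟨fun x => (hP _).1 (h1 x), fun x y z g f hg hf => (hP _).1 ?_,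
      fun x y z g f hf hgf => (hP _).1 ?_⟩
    · simpa [(hP _).2 hg, (hP _).2 hf] using h2 g f
    · simpa [(hP _).2 hgf, (hP _).2 hf] using h3 g f
  have hcb : ((∀ x : C, P (𝟙 x)) ∧
        (∀ ⦃x y z : C⦄ (g : x ⟶ y) (f : y ⟶ z), P g → P f → P (g ≫ f)) ∧
        (∀ ⦃x y z : C⦄ (g : x ⟶ y) (f : y ⟶ z), P f → P (g ≫ f) → P g)) →
      (∃ μ : ∀ ⦃x y : C⦄, (x ⟶ y) → ENNReal,
        (∀ x : C, μ (𝟙 x) = 0) ∧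
        (∀ ⦃x y z : C⦄ (g : x ⟶ y) (f : y ⟶ z), μ (g ≫ f) ≤ μ f + μ g) ∧
        (∀ ⦃x y z : C⦄ (g : x ⟶ y) (f : y ⟶ z), μ g ≤ μ (g ≫ f) + μ f) ∧
        (∀ ⦃x y : C⦄ (f : x ⟶ y), μ f = 0 ∨ μ f = ⊤) ∧
        (∀ ⦃x y : C⦄ (f : x ⟶ y), μ f = 0 ↔ P f)) := by
    rintro ⟨h1, h2, h3⟩
    refine ⟨fun x y f => if P f then 0 else ⊤, fun x => by simp [h1 x],
      fun x y z g f => ?_, fun x y z g f => ?_, fun x y f => ?_, fun x y f => by simp⟩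
    · by_cases hf : P f
      · by_cases hg : P g
        · simp [hf, hg, h2 g f hg hf]
        · simp [hg]
      · simp [hf]
    · by_cases hf : P f
      · by_cases hgf : P (g ≫ f)
        · simp [hf, hgf, h3 g f hf hgf]
        · simp [hgf]
      · simp [hf]
    · by_cases hf : P f <;> simp [hf]
  refine ⟨⟨fun h => hcb (hac h), ?_⟩, ⟨hac, fun h => ?_⟩⟩
  · rintro ⟨μ, h1, h2, h3, -, hP⟩
    exact ⟨μ, h1, h2, h3, hP⟩
  · obtain ⟨μ, h1, h2, h3, -, hP⟩ := hcb h
    exact ⟨μ, h1, h2, h3, hP⟩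
end

section
/- Let X, Y, Z be metric spaces. Let e₁ : X → Y be an isometric embedding and p₁ : Y → X a 1-Lipschitz map with p₁ ∘ e₁ = id_X; let e₂ : Y → Z be an isometric embedding and p₂ : Z → Y a 1-Lipschitz map with p₂ ∘ e₂ = id_Y. Then sup_{y ∈ Y} edist(e₁(p₁(y)), y) ≤ sup_{z ∈ Z} edist(e₂(e₁(p₁(p₂(z)))), z) + sup_{z ∈ Z} edist(e₂(p₂(z)), z), where the suprema and extended distances are taken in [0,∞]. -/
/-- axiom (MC3) for the norm `δ` on the category of
embedding-projection pairs of metric spaces. -/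
theorem stmt_7 {X Y Z : Type*} [MetricSpace X] [MetricSpace Y] [MetricSpace Z]
    (e₁ : X → Y) (p₁ : Y → X) (e₂ : Y → Z) (p₂ : Z → Y)
    (he₁ : Isometry e₁) (hp₁ : LipschitzWith 1 p₁) (hpe₁ : ∀ x : X, p₁ (e₁ x) = x)
    (he₂ : Isometry e₂) (hp₂ : LipschitzWith 1 p₂) (hpe₂ : ∀ y : Y, p₂ (e₂ y) = y) :
    (⨆ y : Y, edist (e₁ (p₁ y)) y) ≤
      (⨆ z : Z, edist (e₂ (e₁ (p₁ (p₂ z)))) z) + (⨆ z : Z, edist (e₂ (p₂ z)) z) := by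
  refine le_add_right (iSup_le fun y => ?_)
  -- At `z = e₂ y` the term of the first supremum is `edist (e₂ (e₁ (p₁ y))) (e₂ y)`,
  -- so the isometry `e₂` already gives the bound without the second summand.
  have h := le_iSup (fun z : Z => edist (e₂ (e₁ (p₁ (p₂ z)))) z) (e₂ y)
  simpa only [hpe₂, he₂.edist_eq] using h
end

section
/- Let X and Y be real normed vector spaces, f : X → Y a linear map, and 0 < ε < 1. The following are equivalent: (a) there exists a norm N on the product space X × Y (i.e. N : X × Y → ℝ with N(v) = 0 iff v = 0, N(a • v) = |a| · N(v), and N(u + v) ≤ N(u) + N(v)) such that N(x, 0) = ‖x‖ for all x ∈ X, N(0, y) = ‖y‖ for all y ∈ Y, and N(x, −f(x)) ≤ ε · ‖x‖ for all x ∈ X; (b) (1 − ε) · ‖x‖ ≤ ‖f(x)‖ ≤ (1 + ε) · ‖x‖ for all x ∈ X. -/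
/-!
Given a norm `N` as in the first condition, the triangle inequality along
`(x, 0) = (x, -f x) + (0, f x)` and `(0, -f x) = (x, -f x) + (-x, 0)` yields the two bounds.

Conversely, take the largest seminorm on `X × Y` that is dominated by the given norms on both
factors and by `ε * ‖w‖` at `(w, -f w)`, namely the infimal convolution
`N (x, y) = ⨅ w, ‖x - w‖ + ‖y + f w‖ + ε * ‖w‖`. The lower bound on `‖f w‖` says exactly that
`N (x, 0)` is not smaller than `‖x‖`, the upper bound that `N (0, y)` is not smaller than `‖y‖`.
Definiteness follows from `ε * ‖x‖ ≤ N (x, y)`.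
-/

section GluedNorm

variable {X Y : Type*} [NormedAddCommGroup X] [NormedSpace ℝ X]
  [NormedAddCommGroup Y] [NormedSpace ℝ Y]

/-- The cost of the decomposition `(x, y) = (x - w, 0) + (0, y + f w) + (w, -f w)`, where the
last summand is charged `ε * ‖w‖`. -/
noncomputable def gluedCost (f : X →ₗ[ℝ] Y) (ε : ℝ) (v : X × Y) (w : X) : ℝ :=
  ‖v.1 - w‖ + ‖v.2 + f w‖ + ε * ‖w‖

/-- The infimal convolution of the norms of `X` and `Y` along the graph of `-f`. -/
noncomputable def gluedNorm (f : X →ₗ[ℝ] Y) (ε : ℝ) (v : X × Y) : ℝ :=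
  ⨅ w, gluedCost f ε v w

lemma gluedNorm_le (f : X →ₗ[ℝ] Y) {ε : ℝ} (hε : 0 < ε) (v : X × Y) (w : X) :
    gluedNorm f ε v ≤ gluedCost f ε v w := by
  refine ciInf_le ⟨0, ?_⟩ w
  rintro _ ⟨w, rfl⟩
  simp only [gluedCost]
  positivity

lemma gluedNorm_smul_le (f : X →ₗ[ℝ] Y) {ε : ℝ} (hε : 0 < ε) (a : ℝ) (v : X × Y) :
    gluedNorm f ε (a • v) ≤ |a| * gluedNorm f ε v := by
  rw [gluedNorm.eq_def f ε v, Real.mul_iInf_of_nonneg (abs_nonneg a)]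
  refine le_ciInf fun w => (gluedNorm_le f hε _ (a • w)).trans_eq ?_
  simp only [gluedCost, Prod.smul_fst, Prod.smul_snd, map_smul, ← smul_sub, ← smul_add,
    norm_smul, Real.norm_eq_abs]
  ring

lemma gluedNorm_add_le (f : X →ₗ[ℝ] Y) {ε : ℝ} (hε : 0 < ε) (u v : X × Y) :
    gluedNorm f ε (u + v) ≤ gluedNorm f ε u + gluedNorm f ε v := by
  refine le_ciInf_add_ciInf fun w z => (gluedNorm_le f hε _ (w + z)).trans ?_
  simp only [gluedCost, Prod.fst_add, Prod.snd_add, map_add]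
  have h1 := norm_add_le (u.1 - w) (v.1 - z)
  have h2 := norm_add_le (u.2 + f w) (v.2 + f z)
  have h3 := mul_le_mul_of_nonneg_left (norm_add_le w z) hε.le
  rw [sub_add_sub_comm] at h1
  rw [add_add_add_comm] at h2
  linarith

lemma gluedNorm_inl (f : X →ₗ[ℝ] Y) {ε : ℝ} (hε : 0 < ε)
    (hf : ∀ x, (1 - ε) * ‖x‖ ≤ ‖f x‖) (x : X) : gluedNorm f ε (x, 0) = ‖x‖ := by
  refine le_antisymm ((gluedNorm_le f hε _ 0).trans_eq (by simp [gluedCost])) ?_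
  refine le_ciInf fun w => ?_
  have h := norm_add_le (x - w) w
  simp only [gluedCost, zero_add]
  rw [sub_add_cancel] at h
  linarith [hf w]

lemma gluedNorm_inr (f : X →ₗ[ℝ] Y) {ε : ℝ} (hε : 0 < ε)
    (hf : ∀ x, ‖f x‖ ≤ (1 + ε) * ‖x‖) (y : Y) : gluedNorm f ε (0, y) = ‖y‖ := by
  refine le_antisymm ((gluedNorm_le f hε _ 0).trans_eq (by simp [gluedCost])) ?_
  refine le_ciInf fun w => ?_
  have h := norm_sub_le (y + f w) (f w)
  simp only [gluedCost, zero_sub, norm_neg]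
  rw [add_sub_cancel_right] at h
  linarith [hf w]

lemma mul_norm_fst_le_gluedNorm (f : X →ₗ[ℝ] Y) {ε : ℝ} (hε : 0 < ε) (hε1 : ε < 1)
    (v : X × Y) : ε * ‖v.1‖ ≤ gluedNorm f ε v := by
  refine le_ciInf fun w => ?_
  have h := norm_add_le (v.1 - w) w
  rw [sub_add_cancel] at h
  have h1 := mul_le_mul_of_nonneg_left h hε.le
  have h2 := mul_le_mul_of_nonneg_right hε1.le (norm_nonneg (v.1 - w))
  simp only [gluedCost]
  linarith [norm_nonneg (v.2 + f w)]

end GluedNorm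

/-- For a linear map `f : X → Y` between real normed spaces and
`0 < ε < 1`, there is a norm on `X × Y` extending the norms of `X` and `Y` with
`N (x, -f x) ≤ ε * ‖x‖` iff `(1 - ε) * ‖x‖ ≤ ‖f x‖ ≤ (1 + ε) * ‖x‖` for all `x`. -/
theorem stmt_8 {X Y : Type*} [NormedAddCommGroup X] [NormedSpace ℝ X]
    [NormedAddCommGroup Y] [NormedSpace ℝ Y]
    (f : X →ₗ[ℝ] Y) (ε : ℝ) (hε0 : 0 < ε) (hε1 : ε < 1) :
    (∃ N : X × Y → ℝ,
      (∀ v : X × Y, N v = 0 ↔ v = 0) ∧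
      (∀ (a : ℝ) (v : X × Y), N (a • v) = |a| * N v) ∧
      (∀ u v : X × Y, N (u + v) ≤ N u + N v) ∧
      (∀ x : X, N (x, 0) = ‖x‖) ∧
      (∀ y : Y, N (0, y) = ‖y‖) ∧
      (∀ x : X, N (x, -f x) ≤ ε * ‖x‖)) ↔
    (∀ x : X, (1 - ε) * ‖x‖ ≤ ‖f x‖ ∧ ‖f x‖ ≤ (1 + ε) * ‖x‖) := by
  constructor
  · rintro ⟨N, -, -, hadd, hX, hY, hN⟩ x
    have h1 := hadd (x, -f x) (0, f x)
    have h2 := hadd (x, -f x) (-x, 0)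
    simp only [Prod.mk_add_mk, add_zero, neg_add_cancel, add_neg_cancel, hX, hY, norm_neg]
      at h1 h2
    constructor <;> linarith [hN x]
  · intro hf
    have hX := gluedNorm_inl f hε0 fun x => (hf x).1
    have hY := gluedNorm_inr f hε0 fun x => (hf x).2
    have h0 : gluedNorm f ε 0 = 0 := (hX 0).trans norm_zero
    refine ⟨gluedNorm f ε, fun v => ⟨fun hv => ?_, ?_⟩, fun a v => ?_, gluedNorm_add_le f hε0,
      hX, hY, fun x => (gluedNorm_le f hε0 _ x).trans_eq (by simp [gluedCost])⟩
    · obtain ⟨x, y⟩ := v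
      have h := mul_norm_fst_le_gluedNorm f hε0 hε1 (x, y)
      rw [hv] at h
      have hx : x = 0 := norm_le_zero_iff.1 (nonpos_of_mul_nonpos_right h hε0)
      subst hx
      rw [hY, norm_eq_zero] at hv
      rw [hv, Prod.mk_zero_zero]
    · rintro rfl
      exact h0
    · refine le_antisymm (gluedNorm_smul_le f hε0 a v) ?_
      rcases eq_or_ne a 0 with rfl | ha
      · simp [h0]
      -- The reverse inequality is the scaling bound applied to `a⁻¹` and `a • v`.
      · have h := gluedNorm_smul_le f hε0 a⁻¹ (a • v)
        rw [inv_smul_smul₀ ha, abs_inv] at h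
        exact (le_inv_mul_iff₀ (abs_pos.2 ha)).1 h
end

section
/- Let (𝒦, μ) be a normed category and let x be a sequence in 𝒦. Suppose x is convergent: there is an object v and morphisms g_n : x_n → v with g_m ∘ x_n^m = g_n for n ≤ m, such that (v, (g_n)) is a colimit cocone of the functor x and lim_{n→∞} μ(g_n) = 0. Then x is a Cauchy sequence. -/
open CategoryTheory CategoryTheory.Limits Filter

/-- Every convergent sequence in a normed category is Cauchy.
Convergence of `x : ℕ ⥤ C` means: there is a colimit cocone `c` over `x`
(so `c.ι.app n : x.obj n ⟶ c.pt` with the compatibilities `g_m ∘ x_n^m = g_n`)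
with `μ (c.ι.app n) → 0`. -/
theorem stmt_11 {C : Type*} [Category C]
    (μ : ∀ ⦃x y : C⦄, (x ⟶ y) → ENNReal)
    (hMC1 : ∀ x : C, μ (𝟙 x) = 0)
    (hMC2 : ∀ ⦃x y z : C⦄ (g : x ⟶ y) (f : y ⟶ z), μ (g ≫ f) ≤ μ f + μ g)
    (hMC3 : ∀ ⦃x y z : C⦄ (g : x ⟶ y) (f : y ⟶ z), μ g ≤ μ (g ≫ f) + μ f)
    (x : ℕ ⥤ C) (c : Cocone x) (hc : IsColimit c)
    (hnorm : Tendsto (fun n : ℕ => μ (c.ι.app n)) atTop (nhds 0)) :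
    ∀ ε : ENNReal, 0 < ε → ∃ n₀ : ℕ, ∀ m n : ℕ, ∀ h : m ≤ n,
      n₀ ≤ m → μ (x.map (homOfLE h)) < ε := by
  intro ε hε
  have hhalf : 0 < ε / 2 := ENNReal.half_pos hε.ne'
  obtain ⟨n₀, hn₀⟩ := eventually_atTop.1 (hnorm.eventually (gt_mem_nhds hhalf))
  refine ⟨n₀, fun m n h hm => ?_⟩
  -- (MC3) applied to the cocone identity `x_m^n ≫ g_n = g_m`
  calc μ (x.map (homOfLE h))
      ≤ μ (x.map (homOfLE h) ≫ c.ι.app n) + μ (c.ι.app n) := hMC3 _ _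
    _ = μ (c.ι.app m) + μ (c.ι.app n) := by rw [c.w]
    _ < ε / 2 + ε / 2 := ENNReal.add_lt_add (hn₀ m hm) (hn₀ n (hm.trans h))
    _ = ε := ENNReal.add_halves ε
end

section
/- Let (𝒦, μ) be a normed category, let x and y be Cauchy sequences in 𝒦, let φ : ℕ → ℕ be monotone (order-preserving), and let (f_n) be a transformation from x to y along φ: morphisms f_n : x_n → y_{φ(n)} satisfying y_{φ(m)}^{φ(n)} ∘ f_m = f_n ∘ x_m^n for all m ≤ n. Then the limit lim_{n→∞} μ(f_n) exists in [0,∞], i.e. there is L ∈ [0,∞] such that μ(f_n) → L as n → ∞. -/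
/-!
For `m ≤ n`, the third norm axiom applied to `f m` followed by the bonding map of `y`, then the
naturality square and the second axiom, give
`μ (f m) ≤ μ (f n) + μ (x_m^n) + μ (y_{φ m}^{φ n})`.
The error terms are eventually uniformly small. For `y` this is the Cauchy condition when `φ` is
unbounded; when `φ` is bounded it is eventually constant, and the bonding maps involved are
identities. So for each `ε > 0`, eventually in `m`, `μ (f m) ≤ μ (f n) + ε` for all `n ≥ m`; this
forces `limsup ≤ liminf`, by the lemma `exists_tendsto_of_eventually_le_add`.
-/

open CategoryTheory Filter

/-- An `ENNReal`-valued sequence that is eventually nondecreasing up to arbitrarily small additive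
errors converges in `[0,∞]`, the value `∞` being allowed for terms and limit. -/
theorem exists_tendsto_of_eventually_le_add (u : ℕ → ENNReal)
    (hu : ∀ ε : ENNReal, 0 < ε → ∀ᶠ m in atTop, ∀ n, m ≤ n → u m ≤ u n + ε) :
    ∃ L : ENNReal, Tendsto u atTop (nhds L) := by
  refine ⟨liminf u atTop, tendsto_of_le_liminf_of_limsup_le le_rfl ?_⟩
  refine le_of_forall_pos_le_add fun ε hε => ?_
  refine limsup_le_of_le (by isBoundedDefault) ?_
  filter_upwards [hu ε hε] with m hm
  rw [← tsub_le_iff_right]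
  refine le_liminf_of_le (by isBoundedDefault) ?_
  filter_upwards [eventually_ge_atTop m] with n hn
  exact tsub_le_iff_right.2 (hm n hn)

/-- If `x`, `y` are Cauchy sequences in a normed category and
`(f_n)` is a transformation from `x` to `y` along a monotone `φ : ℕ → ℕ`, then
`lim_{n→∞} μ (f_n)` exists in `[0,∞]`. -/
theorem stmt_12 {C : Type*} [Category C]
    (μ : ∀ ⦃x y : C⦄, (x ⟶ y) → ENNReal)
    (hMC1 : ∀ x : C, μ (𝟙 x) = 0)
    (hMC2 : ∀ ⦃x y z : C⦄ (g : x ⟶ y) (f : y ⟶ z), μ (g ≫ f) ≤ μ f + μ g)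
    (hMC3 : ∀ ⦃x y z : C⦄ (g : x ⟶ y) (f : y ⟶ z), μ g ≤ μ (g ≫ f) + μ f)
    (x y : ℕ ⥤ C)
    (hx : ∀ ε : ENNReal, 0 < ε → ∃ n₀ : ℕ, ∀ m n : ℕ, ∀ h : m ≤ n,
      n₀ ≤ m → μ (x.map (homOfLE h)) < ε)
    (hy : ∀ ε : ENNReal, 0 < ε → ∃ n₀ : ℕ, ∀ m n : ℕ, ∀ h : m ≤ n,
      n₀ ≤ m → μ (y.map (homOfLE h)) < ε)
    (φ : ℕ → ℕ) (hφ : Monotone φ)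
    (f : ∀ n : ℕ, x.obj n ⟶ y.obj (φ n))
    (hf : ∀ m n : ℕ, ∀ h : m ≤ n,
      f m ≫ y.map (homOfLE (hφ h)) = x.map (homOfLE h) ≫ f n) :
    ∃ L : ENNReal, Tendsto (fun n : ℕ => μ (f n)) atTop (nhds L) := by
  refine exists_tendsto_of_eventually_le_add _ fun ε hε => ?_
  have hε2 : 0 < ε / 2 := ENNReal.half_pos hε.ne'
  have hX : ∀ᶠ m in atTop, ∀ n, ∀ h : m ≤ n, μ (x.map (homOfLE h)) ≤ ε / 2 := by
    obtain ⟨N, hN⟩ := hx _ hε2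
    filter_upwards [eventually_ge_atTop N] with m hm n h
    exact (hN m n h hm).le
  have hY : ∀ᶠ m in atTop, ∀ n, ∀ h : m ≤ n, μ (y.map (homOfLE (hφ h))) ≤ ε / 2 := by
    rcases tendsto_atTop_of_monotone hφ with hlim | ⟨l, hl⟩
    · obtain ⟨N, hN⟩ := hy _ hε2
      filter_upwards [hlim.eventually_ge_atTop N] with m hm n h
      exact (hN _ _ (hφ h) hm).le
    · -- `ℕ` is discrete, so a convergent `φ` is eventually equal to its limit.
      rw [nhds_discrete, tendsto_pure, eventually_atTop] at hl
      obtain ⟨N, hN⟩ := hl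
      have key : ∀ (a b : ℕ) (h : a ≤ b), a = b → μ (y.map (homOfLE h)) = 0 := by
        rintro a _ h rfl
        rw [show homOfLE h = 𝟙 a from rfl, y.map_id, hMC1]
      filter_upwards [eventually_ge_atTop N] with m hm n h
      rw [key _ _ (hφ h) ((hN m hm).trans (hN n (hm.trans h)).symm)]
      exact zero_le
  filter_upwards [hX, hY] with m hXm hYm n h
  calc μ (f m) ≤ μ (f m ≫ y.map (homOfLE (hφ h))) + μ (y.map (homOfLE (hφ h))) := hMC3 _ _
    _ = μ (x.map (homOfLE h) ≫ f n) + μ (y.map (homOfLE (hφ h))) := by rw [hf m n h]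
    _ ≤ (μ (f n) + μ (x.map (homOfLE h))) + μ (y.map (homOfLE (hφ h))) := by
        gcongr
        exact hMC2 _ _
    _ ≤ (μ (f n) + ε / 2) + ε / 2 := by
        gcongr
        · exact hXm n h
        · exact hYm n h
    _ = μ (f n) + ε := by rw [add_assoc, ENNReal.add_halves]
end

section
/- Let (𝒦, μ) be a normed category, F : 𝒦 → 𝒦 a functor, and r ∈ [0,∞] with r < 1 such that μ(F(g)) ≤ r · μ(g) for every morphism g (F is a contraction). Let f : a → F(a) be a morphism with μ(f) < ∞. For m ≤ n define the morphism f_m^n : Fᵐ(a) → Fⁿ(a) by f_m^m = id and f_m^{n+1} = Fⁿ(f) ∘ f_m^n. Then the sequence (Fⁿ(a))_n with bonding morphisms f_m^n is Cauchy: for every ε > 0 there is n₀ such that μ(f_m^n) < ε whenever n₀ ≤ m ≤ n. -/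
/-!
The step `Fⁿ(f)` has norm at most `rⁿ μ(f)`, so subadditivity bounds `μ(f_m^n)` by
`(∑_{m ≤ i < n} rⁱ) μ(f)`, a piece of a geometric series, hence by `r^m (1 - r)⁻¹ μ(f)`.
Since `r < 1` and `μ(f) < ∞`, this tends to `0` as `m → ∞`, uniformly in `n`.
-/

open CategoryTheory

/-- The `n`-fold iterate of an endofunctor, with `Fⁿ⁺¹ = Fⁿ ∘ F`, so that
`(iterate F n).obj (F.obj a) = (iterate F (n+1)).obj a` definitionally. -/
def CategoryTheory.Functor.iterate {C : Type*} [Category C] (F : C ⥤ C) : ℕ → C ⥤ C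
  | 0 => 𝟭 C
  | n + 1 => F ⋙ F.iterate n

theorem norm_iterate_map_le {C : Type*} [Category C]
    (μ : ∀ ⦃x y : C⦄, (x ⟶ y) → ENNReal) (F : C ⥤ C) (r : ENNReal)
    (hF : ∀ ⦃x y : C⦄ (g : x ⟶ y), μ (F.map g) ≤ r * μ g) (n : ℕ) :
    ∀ ⦃x y : C⦄ (g : x ⟶ y), μ ((F.iterate n).map g) ≤ r ^ n * μ g := by
  induction n with
  | zero => intro x y g; simp [Functor.iterate]
  | succ n ih =>
    intro x y g
    calc μ ((F.iterate n).map (F.map g)) ≤ r ^ n * μ (F.map g) := ih _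
      _ ≤ r ^ n * (r * μ g) := by gcongr; exact hF g
      _ = r ^ (n + 1) * μ g := by ring

theorem sum_Ico_pow_le (r : ENNReal) (m n : ℕ) :
    ∑ i ∈ Finset.Ico m n, r ^ i ≤ r ^ m * (1 - r)⁻¹ := by
  rw [Finset.sum_Ico_eq_sum_range, ← ENNReal.tsum_geometric]
  simp only [pow_add, ← Finset.mul_sum]
  gcongr
  exact ENNReal.sum_le_tsum _

/-- if `F` is a contraction with ratio `r < 1` and `f : a ⟶ F a`
has finite norm, then the iteration sequence `a → F(a) → F²(a) → ⋯`, with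
bonding morphisms `f_m^n` determined by `f_m^m = id` and
`f_m^{n+1} = Fⁿ(f) ∘ f_m^n`, is a Cauchy sequence. -/
theorem stmt_13 {C : Type*} [Category C]
    (μ : ∀ ⦃x y : C⦄, (x ⟶ y) → ENNReal)
    (hMC1 : ∀ x : C, μ (𝟙 x) = 0)
    (hMC2 : ∀ ⦃x y z : C⦄ (g : x ⟶ y) (f : y ⟶ z), μ (g ≫ f) ≤ μ f + μ g)
    (hMC3 : ∀ ⦃x y z : C⦄ (g : x ⟶ y) (f : y ⟶ z), μ g ≤ μ (g ≫ f) + μ f)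
    (F : C ⥤ C) (r : ENNReal) (hr : r < 1)
    (hF : ∀ ⦃x y : C⦄ (g : x ⟶ y), μ (F.map g) ≤ r * μ g)
    (a : C) (f : a ⟶ F.obj a) (hf : μ f < ⊤)
    (b : ∀ m n : ℕ, m ≤ n → ((F.iterate m).obj a ⟶ (F.iterate n).obj a))
    (hb_refl : ∀ m : ℕ, b m m le_rfl = 𝟙 _)
    (hb_succ : ∀ m n : ℕ, ∀ h : m ≤ n,
      b m (n + 1) (h.trans (Nat.le_succ n)) = b m n h ≫ (F.iterate n).map f) :
    ∀ ε : ENNReal, 0 < ε → ∃ n₀ : ℕ, ∀ m n : ℕ, ∀ h : m ≤ n,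
      n₀ ≤ m → μ (b m n h) < ε := by
  intro ε hε
  have key : ∀ m n : ℕ, ∀ h : m ≤ n, μ (b m n h) ≤ (∑ i ∈ Finset.Ico m n, r ^ i) * μ f := by
    intro m n h
    induction n, h using Nat.le_induction with
    | base => rw [hb_refl, hMC1]; exact zero_le
    | succ n h ih =>
      rw [hb_succ m n h, Finset.sum_Ico_succ_top h, add_mul]
      exact (hMC2 _ _).trans
        ((add_le_add (norm_iterate_map_le μ F r hF n f) ih).trans_eq (add_comm _ _))
  have hfin : (1 - r)⁻¹ * μ f ≠ ⊤ :=
    ENNReal.mul_ne_top (ENNReal.inv_ne_top.2 (tsub_pos_of_lt hr).ne') hf.ne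
  have hlim : Filter.Tendsto (fun m : ℕ => r ^ m * ((1 - r)⁻¹ * μ f)) Filter.atTop (nhds 0) := by
    simpa using ENNReal.Tendsto.mul_const (ENNReal.tendsto_pow_atTop_nhds_zero_of_lt_one hr)
      (Or.inr hfin)
  obtain ⟨n₀, hn₀⟩ := Filter.eventually_atTop.1 (hlim.eventually_lt_const hε)
  refine ⟨n₀, fun m n h hm => lt_of_le_of_lt ?_ (hn₀ m hm)⟩
  rw [← mul_assoc]
  exact (key m n h).trans (mul_le_mul_left (sum_Ico_pow_le r m n) _)
end
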